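/- arXiv:1902.01303 — 2 statements merged into one kernel-verified Lean document; each statement's English description precedes it below -/
import Mathlib

section
/- Let Γ be a group with a finite symmetric generating set S and let ρ: Γ → GL(d,ℝ) be an {a_p}-Anosov representation. Then there exist constants C' > 0 and μ' > 0, depending only on ρ, such that for every geodesic ray (α_i)_{i≥0} in Γ with α_0 = e: the matrices ρ(α_i) have a gap of index p for all sufficiently large i, the limit ξ := lim_{i→∞} U_p(ρ(α_i)) exists in the Grassmannian of p-dimensional subspaces of ℝ^d, and d(U_p(ρ(α_i)), ξ) ≤ C'·e^{−μ'·i} for all such i. Moreover, if (α_i) and (β_i) are geodesic rays with α_0 = β_0 = e and sup_i d_Γ(α_i, β_i) < ∞, then they yield the same limit ξ. -/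
noncomputable section

open scoped Matrix RealInnerProductSpace
open Filter Topology

namespace Paper

abbrev Euc (d : ℕ) : Type := EuclideanSpace ℝ (Fin d)

/-- The action of a `d × d` real matrix on Euclidean space. -/
def act {d : ℕ} (g : Matrix (Fin d) (Fin d) ℝ) (v : Euc d) : Euc d :=
  Matrix.toEuclideanCLM (𝕜 := ℝ) g v

/-- The operator norm of a matrix acting on Euclidean space. -/
def opNorm {d : ℕ} (g : Matrix (Fin d) (Fin d) ℝ) : ℝ :=
  ‖(Matrix.toEuclideanCLM (𝕜 := ℝ) g : Euc d →L[ℝ] Euc d)‖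

/-- The underlying matrix of an element of `GL (Fin d) ℝ`. -/
def mat {d : ℕ} (g : GL (Fin d) ℝ) : Matrix (Fin d) (Fin d) ℝ := ↑g

/-- The `p`-th singular value (`1`-indexed), via the min-max characterization:
`σ_p(g)` is the largest, over `p`-dimensional subspaces `P`, of the minimal
stretch of unit vectors of `P`. -/
def sv {d : ℕ} (g : Matrix (Fin d) (Fin d) ℝ) (p : ℕ) : ℝ :=
  sSup { r | ∃ P : Submodule ℝ (Euc d), Module.finrank ℝ P = p ∧
      r = sInf { t | ∃ v ∈ P, ‖v‖ = 1 ∧ t = ‖act g v‖ } }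

/-- `g` has a gap of index `p` if `σ_p(g) > σ_{p+1}(g)`. -/
def HasGap {d : ℕ} (g : Matrix (Fin d) (Fin d) ℝ) (p : ℕ) : Prop :=
  sv g (p + 1) < sv g p

/-- `U` is a Cartan attractor of index `p` for `g`: for some singular value
decomposition `g = k·a·l` (`k`, `l` orthogonal, `a` diagonal with decreasing
nonnegative entries), `U` is the span of the first `p` columns of `k`. -/
def IsCartanAttractor {d : ℕ} (g : Matrix (Fin d) (Fin d) ℝ) (p : ℕ)
    (U : Submodule ℝ (Euc d)) : Prop :=
  ∃ k l : Matrix (Fin d) (Fin d) ℝ, ∃ σ : Fin d → ℝ,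
    k ∈ Matrix.unitaryGroup (Fin d) ℝ ∧ l ∈ Matrix.unitaryGroup (Fin d) ℝ ∧
    (∀ i j : Fin d, i ≤ j → σ j ≤ σ i) ∧ (∀ i, 0 ≤ σ i) ∧
    g = k * Matrix.diagonal σ * l ∧
    U = Submodule.span ℝ { x : Euc d | ∃ i : Fin d, (i : ℕ) < p ∧
          x = (EuclideanSpace.equiv (Fin d) ℝ).symm (fun j => k j i) }

/-- The Cartan attractor `U_p(g)`; when `g` has a gap of index `p` it is the
unique subspace satisfying `IsCartanAttractor g p`. -/
def cartanAttractor {d : ℕ} (g : Matrix (Fin d) (Fin d) ℝ) (p : ℕ) :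
    Submodule ℝ (Euc d) :=
  letI := Classical.propDecidable (∃ U, IsCartanAttractor g p U)
  if h : ∃ U, IsCartanAttractor g p U then h.choose else ⊥

/-- The angle `∠(P,Q)` between two subspaces: the infimum of angles between
nonzero vectors of `P` and `Q`. -/
def subAngle {d : ℕ} (P Q : Submodule ℝ (Euc d)) : ℝ :=
  sInf { θ | ∃ v ∈ P, v ≠ 0 ∧ ∃ w ∈ Q, w ≠ 0 ∧ θ = InnerProductGeometry.angle v w }

/-- `sin ∠(v,w)`. -/
def sinAngle {d : ℕ} (v w : Euc d) : ℝ := Real.sin (InnerProductGeometry.angle v w)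

/-- The distance `d(P,Q) = max_{v ∈ P∖{0}} min_{w ∈ Q∖{0}} sin ∠(v,w)`. -/
def grassDist {d : ℕ} (P Q : Submodule ℝ (Euc d)) : ℝ :=
  sSup { r | ∃ v ∈ P, v ≠ 0 ∧
      r = sInf { s | ∃ w ∈ Q, w ≠ 0 ∧ s = sinAngle v w } }

/-- The image `g·P` of a subspace under a matrix. -/
def mapMat {d : ℕ} (g : Matrix (Fin d) (Fin d) ℝ) (P : Submodule ℝ (Euc d)) :
    Submodule ℝ (Euc d) :=
  P.map ((Matrix.toEuclideanCLM (𝕜 := ℝ) g : Euc d →L[ℝ] Euc d) : Euc d →ₗ[ℝ] Euc d)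

/-- `m(g|_W)`, the minimal stretch of unit vectors of `W` under `g`. -/
def minRestrict {d : ℕ} (g : Matrix (Fin d) (Fin d) ℝ) (W : Submodule ℝ (Euc d)) : ℝ :=
  sInf { t | ∃ v ∈ W, ‖v‖ = 1 ∧ t = ‖act g v‖ }

/-- `‖g|_W‖`, the maximal stretch of unit vectors of `W` under `g`. -/
def normRestrict {d : ℕ} (g : Matrix (Fin d) (Fin d) ℝ) (W : Submodule ℝ (Euc d)) : ℝ :=
  sSup { t | ∃ v ∈ W, ‖v‖ = 1 ∧ t = ‖act g v‖ }


/-- The word length of `γ` with respect to the generating set `S`. -/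
def wordLength {Γ : Type*} [Group Γ] (S : Set Γ) (γ : Γ) : ℕ :=
  sInf { n | ∃ l : List Γ, l.length = n ∧ (∀ x ∈ l, x ∈ S) ∧ l.prod = γ }

/-!
By the min-max principle, multiplying `a` by `b` changes `σ_p(a)` by at most the condition number
of `b`. A vector of the attractor of `a b` is the image of some `x` stretched by at least
`σ_p(a b)`, while its component off the attractor of `a` is at most `σ_{p+1}(a) ‖b x‖`; hence
`U_p(a b)` is within `κ(b) σ_{p+1}(a) / σ_p(a)` of `U_p(a)`. Along a sequence whose word length
grows linearly and whose steps are bounded, these distances decay geometrically, so the orthogonal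
projections onto `U_p(ρ(α_i))` form a Cauchy sequence, and the limit of projections is again the
projection onto a `p`-dimensional subspace. Applied with `a = ρ(α_i)` and `b = ρ(α_i⁻¹ β_i)`, the
same estimate shows that sequences at bounded distance have the same limit.
-/

section DirectedGap

variable {𝕜 E : Type*} [RCLike 𝕜] [NormedAddCommGroup E] [InnerProductSpace 𝕜 E]

/-- Kato's directed gap `δ(U, V) = ‖(1 - P_V) P_U‖`, the operator form of the distance `d(U, V)`
from `U` to `V`. It makes sense for subspaces of different dimensions, and vanishes exactly when
`U ≤ V`. -/
def directedGap (U V : Submodule 𝕜 E) [U.HasOrthogonalProjection] [V.HasOrthogonalProjection] :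
    ℝ :=
  ‖(1 - V.starProjection) * U.starProjection‖

lemma exists_map_mem_orthogonal_of_finrank_lt {F : Type*} [AddCommGroup F] [Module 𝕜 F]
    (f : F →ₗ[𝕜] E) (K : Submodule 𝕜 E) {P : Submodule 𝕜 F} [FiniteDimensional 𝕜 K]
    [FiniteDimensional 𝕜 P] (h : Module.finrank 𝕜 K < Module.finrank 𝕜 P) :
    ∃ x ∈ P, x ≠ 0 ∧ f x ∈ Kᗮ := by
  obtain ⟨x, hx, hx0⟩ := Submodule.exists_mem_ne_zero_of_ne_bot <|
    LinearMap.ker_ne_bot_of_finrank_lt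
      (f := (K.orthogonalProjectionOnto : E →ₗ[𝕜] K) ∘ₗ f ∘ₗ P.subtype) h
  exact ⟨x, x.2, by simpa using hx0, K.orthogonalProjectionOnto_eq_zero_iff.1 hx⟩

variable {U V : Submodule 𝕜 E} [U.HasOrthogonalProjection] [V.HasOrthogonalProjection]

lemma norm_sub_starProjection_le_directedGap_mul {v : E} (hv : v ∈ U) :
    ‖v - V.starProjection v‖ ≤ directedGap U V * ‖v‖ := by
  simpa [directedGap, U.starProjection_eq_self_iff.2 hv] using
    ((1 - V.starProjection) * U.starProjection).le_opNorm v

lemma directedGap_le {r : ℝ} (hr : 0 ≤ r)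
    (h : ∀ v ∈ U, ‖v - V.starProjection v‖ ≤ r * ‖v‖) : directedGap U V ≤ r :=
  ContinuousLinearMap.opNorm_le_bound _ hr fun x ↦
    (h _ (U.starProjection_apply_mem x)).trans <|
      mul_le_mul_of_nonneg_left (U.norm_starProjection_apply_le x) hr

lemma directedGap_le_directedGap_add_norm_sub (U V W : Submodule 𝕜 E)
    [U.HasOrthogonalProjection] [V.HasOrthogonalProjection] [W.HasOrthogonalProjection] :
    directedGap U W ≤ directedGap U V + ‖V.starProjection - W.starProjection‖ := by
  have hsplit : (1 - W.starProjection) * U.starProjection =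
      (1 - V.starProjection) * U.starProjection +
        (V.starProjection - W.starProjection) * U.starProjection := by noncomm_ring
  refine (congrArg norm hsplit).trans_le <| (norm_add_le _ _).trans <| add_le_add le_rfl ?_
  exact (norm_mul_le _ _).trans <|
    mul_le_of_le_one_right (norm_nonneg _) U.starProjection_norm_le

lemma directedGap_le_norm_sub (U V : Submodule 𝕜 E)
    [U.HasOrthogonalProjection] [V.HasOrthogonalProjection] :
    directedGap U V ≤ ‖U.starProjection - V.starProjection‖ := by
  have hself : directedGap U U = 0 := by
    simp [directedGap, sub_mul, U.isIdempotentElem_starProjection.eq]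
  simpa [hself] using directedGap_le_directedGap_add_norm_sub U U V

-- `P_U - P_V = (1 - P_V) P_U - P_V (1 - P_U)`, and the last term is the adjoint of `(1 - P_U) P_V`.
lemma norm_starProjection_sub_le_directedGap_add [CompleteSpace E] (U V : Submodule 𝕜 E)
    [U.HasOrthogonalProjection] [V.HasOrthogonalProjection] :
    ‖U.starProjection - V.starProjection‖ ≤ directedGap U V + directedGap V U := by
  have hsplit : U.starProjection - V.starProjection =
      (1 - V.starProjection) * U.starProjection -
        star ((1 - U.starProjection) * V.starProjection) := by
    simp only [star_mul, star_sub, star_one, (isSelfAdjoint_starProjection _).star_eq]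
    noncomm_ring
  rw [hsplit, directedGap, directedGap, ← norm_star ((1 - U.starProjection) * V.starProjection)]
  exact norm_sub_le _ _

lemma finrank_le_of_directedGap_lt_one [FiniteDimensional 𝕜 U] [FiniteDimensional 𝕜 V]
    (h : directedGap U V < 1) : Module.finrank 𝕜 U ≤ Module.finrank 𝕜 V := by
  by_contra! hlt
  obtain ⟨v, hv, hv0, hvV⟩ := exists_map_mem_orthogonal_of_finrank_lt LinearMap.id V hlt
  have hle : ‖v‖ ≤ directedGap U V * ‖v‖ := by
    simpa [(V.starProjection_apply_eq_zero_iff (v := v)).2 hvV] using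
      norm_sub_starProjection_le_directedGap_mul (V := V) hv
  exact h.not_ge ((le_mul_iff_one_le_left (norm_pos_iff.2 hv0)).1 hle)

lemma finrank_eq_of_norm_starProjection_sub_lt_one [FiniteDimensional 𝕜 U]
    [FiniteDimensional 𝕜 V] (h : ‖U.starProjection - V.starProjection‖ < 1) :
    Module.finrank 𝕜 U = Module.finrank 𝕜 V :=
  le_antisymm (finrank_le_of_directedGap_lt_one ((directedGap_le_norm_sub U V).trans_lt h))
    (finrank_le_of_directedGap_lt_one
      ((directedGap_le_norm_sub V U).trans_lt (norm_sub_rev U.starProjection _ ▸ h)))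

lemma isStarProjection_of_tendsto {R ι : Type*} [TopologicalSpace R] [T2Space R] [Mul R]
    [ContinuousMul R] [Star R] [ContinuousStar R] {l : Filter ι} [l.NeBot] {f : ι → R} {a : R}
    (hf : ∀ i, IsStarProjection (f i)) (h : Tendsto f l (𝓝 a)) : IsStarProjection a where
  isIdempotentElem := tendsto_nhds_unique
    ((h.mul h).congr fun i ↦ (hf i).isIdempotentElem.eq) h
  isSelfAdjoint := tendsto_nhds_unique
    (h.star.congr fun i ↦ (hf i).isSelfAdjoint.star_eq) h

lemma exists_norm_starProjection_sub_le_geometric [FiniteDimensional 𝕜 E]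
    {U : ℕ → Submodule 𝕜 E} {C r : ℝ} (hr : r < 1)
    (hU : ∀ i, directedGap (U i) (U (i + 1)) ≤ C * r ^ i)
    (hU' : ∀ i, directedGap (U (i + 1)) (U i) ≤ C * r ^ i) :
    ∃ ξ : Submodule 𝕜 E, ∀ i,
      ‖(U i).starProjection - ξ.starProjection‖ ≤ 2 * C / (1 - r) * r ^ i := by
  have : CompleteSpace E := FiniteDimensional.complete 𝕜 E
  have hdist : ∀ i, dist (U i).starProjection (U (i + 1)).starProjection ≤ 2 * C * r ^ i :=
    fun i ↦ by
      rw [dist_eq_norm]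
      linarith [norm_starProjection_sub_le_directedGap_add (U i) (U (i + 1)), hU i, hU' i]
  obtain ⟨P, hP⟩ := cauchySeq_tendsto_of_complete (cauchySeq_of_le_geometric r (2 * C) hr hdist)
  obtain ⟨ξ, _, rfl⟩ := isStarProjection_iff_eq_starProjection.1
    (isStarProjection_of_tendsto (fun i ↦ isStarProjection_starProjection) hP)
  refine ⟨ξ, fun i ↦ ?_⟩
  rw [← dist_eq_norm, div_mul_eq_mul_div]
  exact dist_le_of_le_geometric_of_tendsto r (2 * C) hr hdist hP i

lemma finrank_eq_of_norm_starProjection_sub_le_geometric [FiniteDimensional 𝕜 E]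
    {U : ℕ → Submodule 𝕜 E} {ξ : Submodule 𝕜 E} {C r : ℝ} {p : ℕ} (hr0 : 0 ≤ r) (hr : r < 1)
    (hU : ∀ i, Module.finrank 𝕜 (U i) = p)
    (hξ : ∀ i, ‖(U i).starProjection - ξ.starProjection‖ ≤ C * r ^ i) :
    Module.finrank 𝕜 ξ = p := by
  have hlim : Tendsto (fun i : ℕ ↦ C * r ^ i) atTop (𝓝 0) := by
    simpa using (tendsto_pow_atTop_nhds_zero_of_lt_one hr0 hr).const_mul C
  obtain ⟨i, hi⟩ := (hlim.eventually_lt_const zero_lt_one).exists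
  rw [← hU i, finrank_eq_of_norm_starProjection_sub_lt_one ((hξ i).trans_lt hi)]

end DirectedGap

section GrassDist

variable {d : ℕ}

lemma sinAngle_nonneg (v w : Euc d) : 0 ≤ sinAngle v w :=
  InnerProductGeometry.sin_angle_nonneg v w

lemma grassDist_nonneg (P Q : Submodule ℝ (Euc d)) : 0 ≤ grassDist P Q := by
  refine Real.sSup_nonneg ?_
  rintro _ ⟨v, -, -, rfl⟩
  refine Real.sInf_nonneg ?_
  rintro _ ⟨w, -, -, rfl⟩
  exact sinAngle_nonneg v w

lemma sinAngle_starProjection (Q : Submodule ℝ (Euc d)) {v : Euc d} (hv : v ≠ 0) :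
    sinAngle v (Q.starProjection v) = ‖v - Q.starProjection v‖ / ‖v‖ := by
  have horth : ⟪Q.starProjection v, v - Q.starProjection v⟫ = 0 :=
    Submodule.inner_right_of_mem_orthogonal (Q.starProjection_apply_mem v)
      (Q.sub_starProjection_mem_orthogonal v)
  have hne : Q.starProjection v ≠ 0 ∨ v - Q.starProjection v ≠ 0 := by
    by_contra! h
    exact hv (by simpa [h.1] using h.2)
  simpa [sinAngle, InnerProductGeometry.angle_comm] using
    InnerProductGeometry.sin_angle_add_of_inner_eq_zero horth hne

lemma sInf_sinAngle_le (Q : Submodule ℝ (Euc d)) {v : Euc d} (hv : v ≠ 0) :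
    sInf { s | ∃ w ∈ Q, w ≠ 0 ∧ s = sinAngle v w } ≤ ‖v - Q.starProjection v‖ / ‖v‖ := by
  have hbdd : BddBelow { s | ∃ w ∈ Q, w ≠ 0 ∧ s = sinAngle v w } :=
    ⟨0, by rintro _ ⟨w, -, -, rfl⟩; exact sinAngle_nonneg v w⟩
  by_cases hproj : Q.starProjection v = 0
  · rw [hproj, sub_zero, div_self (norm_ne_zero_iff.2 hv)]
    obtain hempty | ⟨_, w, hw, hw0, rfl⟩ :=
      { s | ∃ w ∈ Q, w ≠ 0 ∧ s = sinAngle v w }.eq_empty_or_nonempty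
    · simp only [hempty, Real.sInf_empty, zero_le_one]
    · exact (csInf_le hbdd ⟨w, hw, hw0, rfl⟩).trans (Real.sin_le_one _)
  · rw [← sinAngle_starProjection Q hv]
    exact csInf_le hbdd ⟨_, Q.starProjection_apply_mem v, hproj, rfl⟩

lemma grassDist_le_directedGap (P Q : Submodule ℝ (Euc d)) :
    grassDist P Q ≤ directedGap P Q := by
  refine Real.sSup_le ?_ (norm_nonneg _)
  rintro _ ⟨v, hv, hv0, rfl⟩
  exact (sInf_sinAngle_le Q hv0).trans <|
    (div_le_iff₀ (norm_pos_iff.2 hv0)).2 (norm_sub_starProjection_le_directedGap_mul hv)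

end GrassDist
section SingularValueDecomposition

variable {E F : Type*} [NormedAddCommGroup E] [InnerProductSpace ℝ E]
  [NormedAddCommGroup F] [InnerProductSpace ℝ F]

lemma norm_le_norm_of_abs_inner_le {ι : Type*} [Fintype ι] (b : OrthonormalBasis ι ℝ E)
    (b' : OrthonormalBasis ι ℝ F) {x : E} {y : F} (h : ∀ i, |⟪b i, x⟫| ≤ |⟪b' i, y⟫|) :
    ‖x‖ ≤ ‖y‖ := by
  rw [← sq_le_sq₀ (norm_nonneg x) (norm_nonneg y), ← b.sum_sq_norm_inner_right x,
    ← b'.sum_sq_norm_inner_right y]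
  exact Finset.sum_le_sum fun i _ ↦ pow_le_pow_left₀ (norm_nonneg _) (h i) 2

lemma inner_eq_zero_of_mem_span_image {ι : Type*} [Fintype ι] (b : OrthonormalBasis ι ℝ E)
    {s : Set ι} {v : E} (hv : v ∈ Submodule.span ℝ (b '' s)) {i : ι} (hi : i ∉ s) :
    ⟪b i, v⟫ = 0 := by
  classical
  rw [← b.repr_apply_apply, ← b.coe_toBasis_repr_apply]
  rw [← b.coe_toBasis] at hv
  exact Finsupp.notMem_support_iff.1 fun h ↦ hi (b.toBasis.mem_span_image.1 hv h)

lemma finrank_span_image_val_lt {n p : ℕ} (b : OrthonormalBasis (Fin n) ℝ E) (hp : p ≤ n) :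
    Module.finrank ℝ (Submodule.span ℝ (b '' {i | (i : ℕ) < p})) = p := by
  rw [Set.image_eq_range]
  refine (finrank_span_eq_card
    (b.orthonormal.linearIndependent.comp _ Subtype.val_injective)).trans ?_
  simp [Fintype.card_subtype, Fin.card_filter_val_lt, hp]

/-- Singular value decomposition of a linear map `T`: `T (w i) = σ i • u i` for orthonormal bases
`w` of the source and `u` of the target, with singular values `σ` nonnegative and listed in
decreasing order. Zero-indexed, so `σ i` is the singular value `σ_{i+1}` of the paper. -/
structure IsSVD {n : ℕ} (T : E →ₗ[ℝ] F) (w : OrthonormalBasis (Fin n) ℝ E)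
    (u : OrthonormalBasis (Fin n) ℝ F) (σ : Fin n → ℝ) : Prop where
  apply_eq : ∀ i, T (w i) = σ i • u i
  antitone : Antitone σ
  nonneg : ∀ i, 0 ≤ σ i

lemma inner_map_eigenvectorBasis [FiniteDimensional ℝ E] [FiniteDimensional ℝ F] {n : ℕ}
    (hE : Module.finrank ℝ E = n) (T : E →ₗ[ℝ] F) (i j : Fin n) :
    ⟪T (T.isSymmetric_adjoint_comp_self.eigenvectorBasis hE i),
      T (T.isSymmetric_adjoint_comp_self.eigenvectorBasis hE j)⟫ =
      if i = j then T.singularValues j ^ 2 else 0 := by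
  have heigen := T.isSymmetric_adjoint_comp_self.apply_eigenvectorBasis hE j
  rw [LinearMap.comp_apply] at heigen
  rw [← LinearMap.adjoint_inner_right, heigen, inner_smul_right, orthonormal_iff_ite.1
    (T.isSymmetric_adjoint_comp_self.eigenvectorBasis hE).orthonormal i j, mul_ite, mul_one,
    mul_zero, T.sq_singularValues_fin hE]
  rfl

-- The vectors `σ_i⁻¹ T w_i` with `σ_i ≠ 0` are orthonormal, and any completion of them will do.
lemma exists_isSVD [FiniteDimensional ℝ E] [FiniteDimensional ℝ F] {n : ℕ}
    (hE : Module.finrank ℝ E = n) (hF : Module.finrank ℝ F = n) (T : E →ₗ[ℝ] F) :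
    ∃ w u, IsSVD T w u fun i : Fin n ↦ T.singularValues i := by
  set w := T.isSymmetric_adjoint_comp_self.eigenvectorBasis hE
  set σ : Fin n → ℝ := fun i ↦ T.singularValues i
  have hinner : ∀ i j, ⟪T (w i), T (w j)⟫ = if i = j then σ j ^ 2 else 0 :=
    inner_map_eigenvectorBasis hE T
  have hnormalized : Orthonormal ℝ ({i | σ i ≠ 0}.domRestrict fun i ↦ (σ i)⁻¹ • T (w i)) := by
    refine orthonormal_iff_ite.2 fun i j ↦ ?_
    have hj : σ j ≠ 0 := j.2
    simp only [Set.domRestrict_apply, real_inner_smul_left, real_inner_smul_right, hinner,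
      Subtype.ext_iff]
    split_ifs with hij
    · rw [hij]
      field_simp
    · ring
  obtain ⟨u, hu⟩ := hnormalized.exists_orthonormalBasis_extension_of_card_eq (by simpa using hF)
  refine ⟨w, u, fun i ↦ ?_, fun i j hij ↦ T.singularValues_antitone hij,
    fun i ↦ T.singularValues_nonneg i⟩
  by_cases hi : σ i = 0
  · have hnorm : ⟪T (w i), T (w i)⟫ = 0 := by rw [hinner, if_pos rfl, hi, sq, zero_mul]
    rw [inner_self_eq_zero.1 hnorm, hi, zero_smul]
  · rw [hu i hi, smul_inv_smul₀ hi]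

namespace IsSVD

variable {n : ℕ} {T : E →ₗ[ℝ] F} {w : OrthonormalBasis (Fin n) ℝ E}
  {u : OrthonormalBasis (Fin n) ℝ F} {σ : Fin n → ℝ}

lemma inner_apply (h : IsSVD T w u σ) (v : E) (i : Fin n) : ⟪u i, T v⟫ = σ i * ⟪w i, v⟫ := by
  conv_lhs => rw [← w.sum_repr' v]
  simp [map_sum, inner_sum, h.apply_eq, inner_smul_right, orthonormal_iff_ite.1 u.orthonormal,
    mul_comm]

lemma abs_inner_apply (h : IsSVD T w u σ) (v : E) (i : Fin n) :
    |⟪u i, T v⟫| = σ i * |⟪w i, v⟫| := by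
  rw [h.inner_apply, abs_mul, abs_of_nonneg (h.nonneg i)]

lemma mul_norm_le (h : IsSVD T w u σ) {t : ℝ} (ht : 0 ≤ t) {v : E}
    (hv : ∀ i, ⟪w i, v⟫ ≠ 0 → t ≤ σ i) : t * ‖v‖ ≤ ‖T v‖ := by
  rw [← norm_smul_of_nonneg ht]
  refine norm_le_norm_of_abs_inner_le w u fun i ↦ ?_
  rw [h.abs_inner_apply, inner_smul_right, abs_mul, abs_of_nonneg ht]
  by_cases hi : ⟪w i, v⟫ = 0
  · simp [hi]
  · exact mul_le_mul_of_nonneg_right (hv i hi) (abs_nonneg _)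

lemma norm_le (h : IsSVD T w u σ) {t : ℝ} (ht : 0 ≤ t) {v : E}
    (hv : ∀ i, ⟪w i, v⟫ ≠ 0 → σ i ≤ t) : ‖T v‖ ≤ t * ‖v‖ := by
  rw [← norm_smul_of_nonneg ht]
  refine norm_le_norm_of_abs_inner_le u w fun i ↦ ?_
  rw [h.abs_inner_apply, inner_smul_right, abs_mul, abs_of_nonneg ht]
  by_cases hi : ⟪w i, v⟫ = 0
  · simp [hi]
  · exact mul_le_mul_of_nonneg_right (hv i hi) (abs_nonneg _)

lemma norm_sub_starProjection_le (h : IsSVD T w u σ) {U : Submodule ℝ F}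
    [U.HasOrthogonalProjection] {s : Set (Fin n)} (hU : U = Submodule.span ℝ (u '' s)) {t : ℝ}
    (ht : 0 ≤ t) (hs : ∀ i ∉ s, σ i ≤ t) (v : E) :
    ‖T v - U.starProjection (T v)‖ ≤ t * ‖v‖ := by
  rw [← norm_smul_of_nonneg ht]
  refine norm_le_norm_of_abs_inner_le u w fun i ↦ ?_
  by_cases hi : i ∈ s
  · rw [Submodule.inner_right_of_mem_orthogonal (K := U)
      (hU.ge (Submodule.subset_span (Set.mem_image_of_mem u hi)))
      (U.sub_starProjection_mem_orthogonal _)]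
    simp
  · rw [inner_sub_right,
      inner_eq_zero_of_mem_span_image u (hU.le (U.starProjection_apply_mem _)) hi, sub_zero,
      h.abs_inner_apply, inner_smul_right, abs_mul, abs_of_nonneg ht]
    exact mul_le_mul_of_nonneg_right (hs i hi) (abs_nonneg _)

end IsSVD

end SingularValueDecomposition

section CartanAttractor

variable {d p : ℕ} {g k : Matrix (Fin d) (Fin d) ℝ}

lemma act_mul (g h : Matrix (Fin d) (Fin d) ℝ) (v : Euc d) : act (g * h) v = act g (act h v) := by
  simp only [act, map_mul, mul_apply_eq_comp]

lemma act_single (g : Matrix (Fin d) (Fin d) ℝ) (i : Fin d) :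
    act g (EuclideanSpace.single i 1) = (EuclideanSpace.equiv (Fin d) ℝ).symm fun j ↦ g j i := by
  ext j
  simp [act]

lemma eq_of_act_single {g h : Matrix (Fin d) (Fin d) ℝ}
    (hgh : ∀ i, act g (EuclideanSpace.single i 1) = act h (EuclideanSpace.single i 1)) :
    g = h := by
  refine Matrix.ext fun j i ↦ ?_
  simpa [act_single] using congrArg (fun v : Euc d ↦ v j) (hgh i)

lemma act_diagonal_single (σ : Fin d → ℝ) (i : Fin d) :
    act (Matrix.diagonal σ) (EuclideanSpace.single i 1) = σ i • EuclideanSpace.single i 1 := by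
  ext j
  by_cases hij : j = i <;> simp [act, hij]

lemma exists_orthonormalBasis_eq_act_single (hk : k ∈ Matrix.unitaryGroup (Fin d) ℝ) :
    ∃ b : OrthonormalBasis (Fin d) ℝ (Euc d), ∀ i, b i = act k (EuclideanSpace.single i 1) := by
  let U := Unitary.linearIsometryEquiv (𝕜 := ℝ) (H := Euc d)
    ⟨_, Unitary.map_mem (Matrix.toEuclideanCLM (𝕜 := ℝ) (n := Fin d)) hk⟩
  refine ⟨(EuclideanSpace.basisFun (Fin d) ℝ).map U, fun i ↦ ?_⟩
  rw [OrthonormalBasis.map_apply, EuclideanSpace.basisFun_apply]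
  rfl

lemma exists_mem_unitaryGroup_act_single_eq (b : OrthonormalBasis (Fin d) ℝ (Euc d)) :
    ∃ k ∈ Matrix.unitaryGroup (Fin d) ℝ, ∀ i, act k (EuclideanSpace.single i 1) = b i := by
  refine ⟨_, (EuclideanSpace.basisFun (Fin d) ℝ).toMatrix_orthonormalBasis_mem_unitary b,
    fun i ↦ ?_⟩
  ext j
  simp [act_single, Module.Basis.toMatrix_apply]

lemma isCartanAttractor_iff_exists_isSVD {U : Submodule ℝ (Euc d)} :
    IsCartanAttractor g p U ↔ ∃ (w u : OrthonormalBasis (Fin d) ℝ (Euc d)) (σ : Fin d → ℝ),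
      IsSVD (Matrix.toEuclideanLin g) w u σ ∧ U = Submodule.span ℝ (u '' {i | (i : ℕ) < p}) := by
  constructor
  · rintro ⟨k, l, σ, hk, hl, hanti, hnonneg, rfl, rfl⟩
    obtain ⟨u, hu⟩ := exists_orthonormalBasis_eq_act_single hk
    obtain ⟨w, hw⟩ := exists_orthonormalBasis_eq_act_single (Unitary.star_mem hl)
    refine ⟨w, u, σ, ⟨fun i ↦ ?_, fun i j ↦ hanti i j, hnonneg⟩, ?_⟩
    · change act _ (w i) = σ i • u i
      rw [hw, ← act_mul, mul_assoc, Unitary.mul_star_self_of_mem hl, mul_one, act_mul,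
        act_diagonal_single, hu]
      exact map_smul (Matrix.toEuclideanCLM (𝕜 := ℝ) k) _ _
    · congr 1
      ext x
      simp [hu, act_single, eq_comm]
  · rintro ⟨w, u, σ, h, rfl⟩
    obtain ⟨k, hk, hku⟩ := exists_mem_unitaryGroup_act_single_eq u
    obtain ⟨l, hl, hlw⟩ := exists_mem_unitaryGroup_act_single_eq w
    have hgl : g * l = k * Matrix.diagonal σ := eq_of_act_single fun i ↦ by
      rw [act_mul, act_mul, hlw, act_diagonal_single]
      exact (h.apply_eq i).trans <| hku i ▸ (map_smul (Matrix.toEuclideanCLM (𝕜 := ℝ) k) _ _).symm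
    refine ⟨k, star l, σ, hk, Unitary.star_mem hl, fun i j ↦ @h.antitone i j, h.nonneg, ?_, ?_⟩
    · rw [← hgl, mul_assoc, Unitary.mul_star_self_of_mem hl, mul_one]
    · congr 1
      ext x
      simp [← hku, act_single, eq_comm]

lemma isCartanAttractor_cartanAttractor (g : Matrix (Fin d) (Fin d) ℝ) (p : ℕ) :
    IsCartanAttractor g p (cartanAttractor g p) := by
  have hd : Module.finrank ℝ (Euc d) = d := finrank_euclideanSpace_fin
  obtain ⟨w, u, h⟩ := exists_isSVD hd hd (Matrix.toEuclideanLin g)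
  have hex : ∃ U, IsCartanAttractor g p U :=
    ⟨_, isCartanAttractor_iff_exists_isSVD.2 ⟨w, u, _, h, rfl⟩⟩
  rw [cartanAttractor, dif_pos hex]
  exact hex.choose_spec

lemma IsCartanAttractor.finrank_eq {U : Submodule ℝ (Euc d)} (hU : IsCartanAttractor g p U)
    (hp : p ≤ d) : Module.finrank ℝ U = p := by
  obtain ⟨w, u, σ, -, rfl⟩ := isCartanAttractor_iff_exists_isSVD.1 hU
  exact finrank_span_image_val_lt u hp

end CartanAttractor

section CourantFischer

variable {d p : ℕ} {g : Matrix (Fin d) (Fin d) ℝ} {P : Submodule ℝ (Euc d)}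

lemma norm_act_le (g : Matrix (Fin d) (Fin d) ℝ) (v : Euc d) : ‖act g v‖ ≤ opNorm g * ‖v‖ :=
  ContinuousLinearMap.le_opNorm _ v

lemma opNorm_nonneg (g : Matrix (Fin d) (Fin d) ℝ) : 0 ≤ opNorm g :=
  norm_nonneg _

lemma opNorm_one_le : opNorm (1 : Matrix (Fin d) (Fin d) ℝ) ≤ 1 := by
  rw [opNorm, map_one]
  exact ContinuousLinearMap.norm_id_le

lemma minRestrict_nonneg (g : Matrix (Fin d) (Fin d) ℝ) (P : Submodule ℝ (Euc d)) :
    0 ≤ minRestrict g P := by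
  refine Real.sInf_nonneg ?_
  rintro _ ⟨v, -, -, rfl⟩
  exact norm_nonneg _

lemma minRestrict_le {t : ℝ} {v : Euc d} (hv : v ∈ P) (hv0 : v ≠ 0)
    (h : ‖act g v‖ ≤ t * ‖v‖) : minRestrict g P ≤ t := by
  have hpos : 0 < ‖v‖ := norm_pos_iff.2 hv0
  have hunit : ‖act g (‖v‖⁻¹ • v)‖ ≤ t := by
    rw [act, map_smul, norm_smul, norm_inv, norm_norm, inv_mul_le_iff₀ hpos, mul_comm]
    exact h
  refine le_trans (csInf_le ⟨0, ?_⟩ ⟨_, P.smul_mem _ hv, norm_smul_inv_norm hv0, rfl⟩) hunit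
  rintro _ ⟨w, -, -, rfl⟩
  exact norm_nonneg _

lemma le_minRestrict {t : ℝ} (hP : P ≠ ⊥) (h : ∀ v ∈ P, t * ‖v‖ ≤ ‖act g v‖) :
    t ≤ minRestrict g P := by
  obtain ⟨v, hv, hv0⟩ := P.exists_mem_ne_zero_of_ne_bot hP
  refine le_csInf ⟨_, _, P.smul_mem _ hv, norm_smul_inv_norm hv0, rfl⟩ ?_
  rintro _ ⟨w, hw, hw1, rfl⟩
  simpa [hw1] using h w hw

lemma sv_nonneg (g : Matrix (Fin d) (Fin d) ℝ) (p : ℕ) : 0 ≤ sv g p := by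
  refine Real.sSup_nonneg ?_
  rintro _ ⟨P, -, rfl⟩
  exact minRestrict_nonneg g P

lemma IsSVD.minRestrict_mul_le {w u : OrthonormalBasis (Fin d) ℝ (Euc d)} {σ : Fin d → ℝ}
    (hg : IsSVD (Matrix.toEuclideanLin g) w u σ) (h : Matrix (Fin d) (Fin d) ℝ) (i : Fin d)
    (hP : Module.finrank ℝ P = i + 1) : minRestrict (g * h) P ≤ σ i * opNorm h := by
  set K := Submodule.span ℝ (w '' {j | (j : ℕ) < i})
  have hK : Module.finrank ℝ K < Module.finrank ℝ P := by
    rw [finrank_span_image_val_lt w i.2.le, hP]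
    exact Nat.lt_succ_self _
  obtain ⟨x, hx, hx0, hxK⟩ :=
    exists_map_mem_orthogonal_of_finrank_lt (Matrix.toEuclideanLin h) K hK
  have hbound : ‖act g (act h x)‖ ≤ σ i * ‖act h x‖ := by
    refine hg.norm_le (hg.nonneg i) fun j hj ↦ hg.antitone (not_lt.1 fun hji ↦ hj ?_)
    exact K.inner_right_of_mem_orthogonal
      (Submodule.subset_span (Set.mem_image_of_mem w hji)) hxK
  refine minRestrict_le hx hx0 ?_
  rw [act_mul, mul_assoc]
  exact hbound.trans (mul_le_mul_of_nonneg_left (norm_act_le h x) (hg.nonneg i))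

-- The maximum is attained on the span of the first `i + 1` right singular vectors.
lemma IsSVD.sv_succ {w u : OrthonormalBasis (Fin d) ℝ (Euc d)} {σ : Fin d → ℝ}
    (hg : IsSVD (Matrix.toEuclideanLin g) w u σ) (i : Fin d) : sv g (i + 1) = σ i := by
  have hle : ∀ P : Submodule ℝ (Euc d), Module.finrank ℝ P = i + 1 → minRestrict g P ≤ σ i :=
    fun P hP ↦ by
      simpa using (hg.minRestrict_mul_le 1 i hP).trans
        (mul_le_of_le_one_right (hg.nonneg i) opNorm_one_le)
  set W := Submodule.span ℝ (w '' {j | (j : ℕ) < i + 1})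
  have hW : Module.finrank ℝ W = i + 1 := finrank_span_image_val_lt w i.2
  have hge : σ i ≤ minRestrict g W := by
    refine le_minRestrict (fun h ↦ ?_) fun v hv ↦ hg.mul_norm_le (hg.nonneg i) fun j hj ↦ ?_
    · rw [h, finrank_bot] at hW
      exact Nat.succ_ne_zero _ hW.symm
    · by_contra hlt
      exact hj (inner_eq_zero_of_mem_span_image w hv fun hji ↦
        hlt (hg.antitone (Nat.lt_succ_iff.1 hji)))
  refine IsGreatest.csSup_eq ⟨⟨W, hW, hge.antisymm (hle W hW)⟩, ?_⟩
  rintro _ ⟨P, hP, rfl⟩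
  exact hle P hP

lemma sv_mul_le (g h : Matrix (Fin d) (Fin d) ℝ) (hp : 0 < p) (hpd : p ≤ d) :
    sv (g * h) p ≤ sv g p * opNorm h := by
  obtain ⟨i, rfl⟩ := Nat.exists_eq_succ_of_ne_zero hp.ne'
  have hd : Module.finrank ℝ (Euc d) = d := finrank_euclideanSpace_fin
  obtain ⟨w, u, hg⟩ := exists_isSVD hd hd (Matrix.toEuclideanLin g)
  refine Real.sSup_le ?_ (mul_nonneg (sv_nonneg g _) (opNorm_nonneg h))
  rintro _ ⟨P, hP, rfl⟩
  rw [hg.sv_succ ⟨i, hpd⟩]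
  exact hg.minRestrict_mul_le h ⟨i, hpd⟩ hP

end CourantFischer

section ConditionNumber

variable {d p : ℕ}

lemma opNorm_mul_le (g h : Matrix (Fin d) (Fin d) ℝ) : opNorm (g * h) ≤ opNorm g * opNorm h := by
  simpa only [opNorm, map_mul] using norm_mul_le _ _

/-- Condition number `σ₁(g) / σ_d(g) = ‖g‖ ‖g⁻¹‖`, which bounds how much multiplication by `g` can
distort singular values and angles. -/
def condNumber (g : GL (Fin d) ℝ) : ℝ :=
  opNorm (mat g) * opNorm (mat g⁻¹)

lemma condNumber_nonneg (g : GL (Fin d) ℝ) : 0 ≤ condNumber g :=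
  mul_nonneg (opNorm_nonneg _) (opNorm_nonneg _)

lemma condNumber_inv (g : GL (Fin d) ℝ) : condNumber g⁻¹ = condNumber g := by
  rw [condNumber, condNumber, inv_inv, mul_comm]

lemma condNumber_one_le : condNumber (1 : GL (Fin d) ℝ) ≤ 1 := by
  rw [condNumber, inv_one]
  exact mul_le_one₀ opNorm_one_le (opNorm_nonneg _) opNorm_one_le

lemma condNumber_mul_le (g h : GL (Fin d) ℝ) :
    condNumber (g * h) ≤ condNumber g * condNumber h := by
  have hmul : opNorm (mat (g * h)) ≤ opNorm (mat g) * opNorm (mat h) := opNorm_mul_le _ _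
  have hinv : opNorm (mat (g * h)⁻¹) ≤ opNorm (mat h⁻¹) * opNorm (mat g⁻¹) := by
    rw [mul_inv_rev]
    exact opNorm_mul_le _ _
  calc condNumber (g * h)
      ≤ (opNorm (mat g) * opNorm (mat h)) * (opNorm (mat h⁻¹) * opNorm (mat g⁻¹)) :=
        mul_le_mul hmul hinv (opNorm_nonneg _) (mul_nonneg (opNorm_nonneg _) (opNorm_nonneg _))
    _ = condNumber g * condNumber h := by rw [condNumber, condNumber]; ring

lemma act_mat_inv_act (g : GL (Fin d) ℝ) (v : Euc d) : act (mat g⁻¹) (act (mat g) v) = v := by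
  rw [← act_mul, mat, mat, Units.inv_mul, act, map_one]
  rfl

lemma IsSVD.pos {g : GL (Fin d) ℝ} {w u : OrthonormalBasis (Fin d) ℝ (Euc d)} {σ : Fin d → ℝ}
    (h : IsSVD (Matrix.toEuclideanLin (mat g)) w u σ) (i : Fin d) : 0 < σ i := by
  refine (h.nonneg i).lt_of_ne' fun hi ↦ w.orthonormal.ne_zero i ?_
  have hw : act (mat g) (w i) = 0 := (h.apply_eq i).trans (by rw [hi, zero_smul])
  rw [← act_mat_inv_act g (w i), hw, act, map_zero]

lemma sv_pos (g : GL (Fin d) ℝ) (hp : 0 < p) (hpd : p ≤ d) : 0 < sv (mat g) p := by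
  obtain ⟨i, rfl⟩ := Nat.exists_eq_succ_of_ne_zero hp.ne'
  have hd : Module.finrank ℝ (Euc d) = d := finrank_euclideanSpace_fin
  obtain ⟨w, u, h⟩ := exists_isSVD hd hd (Matrix.toEuclideanLin (mat g))
  rw [h.sv_succ ⟨i, hpd⟩]
  exact h.pos ⟨i, hpd⟩

lemma hasGap_of_div_lt_one {g : GL (Fin d) ℝ} (hp : 0 < p) (hpd : p ≤ d)
    (h : sv (mat g) (p + 1) / sv (mat g) p < 1) : HasGap (mat g) p :=
  (div_lt_one (sv_pos g hp hpd)).1 h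

lemma IsCartanAttractor.sv_mul_norm_le {g : GL (Fin d) ℝ} {U : Submodule ℝ (Euc d)}
    (hU : IsCartanAttractor (mat g) p U) (hp : 0 < p) (hpd : p ≤ d) {x : Euc d}
    (hx : act (mat g) x ∈ U) : sv (mat g) p * ‖x‖ ≤ ‖act (mat g) x‖ := by
  obtain ⟨i, rfl⟩ := Nat.exists_eq_succ_of_ne_zero hp.ne'
  obtain ⟨w, u, σ, h, rfl⟩ := isCartanAttractor_iff_exists_isSVD.1 hU
  rw [h.sv_succ ⟨i, hpd⟩]
  refine h.mul_norm_le (h.nonneg _) fun j hj ↦ ?_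
  by_contra hlt
  have hinner : ⟪u j, act (mat g) x⟫ = 0 := inner_eq_zero_of_mem_span_image u hx fun hji ↦
    hlt (h.antitone (Nat.lt_succ_iff.1 hji))
  exact mul_ne_zero (h.pos j).ne' hj ((h.inner_apply x j).symm.trans hinner)

lemma IsCartanAttractor.norm_act_sub_starProjection_le {g : Matrix (Fin d) (Fin d) ℝ}
    {U : Submodule ℝ (Euc d)} (hU : IsCartanAttractor g p U) (hpd : p < d) (x : Euc d) :
    ‖act g x - U.starProjection (act g x)‖ ≤ sv g (p + 1) * ‖x‖ := by
  obtain ⟨w, u, σ, h, hspan⟩ := isCartanAttractor_iff_exists_isSVD.1 hU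
  rw [h.sv_succ ⟨p, hpd⟩]
  exact h.norm_sub_starProjection_le hspan (h.nonneg _) (fun j hj ↦ h.antitone (not_lt.1 hj)) x

lemma sv_le_sv_mul_mul_opNorm_inv (a b : GL (Fin d) ℝ) (hp : 0 < p) (hpd : p ≤ d) :
    sv (mat a) p ≤ sv (mat (a * b)) p * opNorm (mat b⁻¹) := by
  simpa [mat] using sv_mul_le (mat (a * b)) (mat b⁻¹) hp hpd

-- A vector of `V` is `a b x` with `‖a b x‖ ≥ σ_p(a b) ‖x‖`, while its component off `U` is at most
-- `σ_{p+1}(a) ‖b x‖`.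
lemma IsCartanAttractor.directedGap_mul_le {a b : GL (Fin d) ℝ} {U V : Submodule ℝ (Euc d)}
    (hU : IsCartanAttractor (mat a) p U) (hV : IsCartanAttractor (mat (a * b)) p V)
    (hp : 0 < p) (hpd : p < d) :
    directedGap V U ≤ condNumber b * (sv (mat a) (p + 1) / sv (mat a) p) := by
  have hpos : 0 < sv (mat a) p := sv_pos a hp hpd.le
  refine directedGap_le
    (mul_nonneg (condNumber_nonneg b) (div_nonneg (sv_nonneg _ _) hpos.le)) fun v hv ↦ ?_
  obtain ⟨x, rfl⟩ : ∃ x, act (mat (a * b)) x = v :=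
    ⟨act (mat (a * b)⁻¹) v, by simpa only [inv_inv] using act_mat_inv_act (a * b)⁻¹ v⟩
  set y := act (mat (a * b)) x with hy
  have hlow : sv (mat a) p * ‖x‖ ≤ opNorm (mat b⁻¹) * ‖y‖ :=
    calc sv (mat a) p * ‖x‖
        ≤ sv (mat (a * b)) p * opNorm (mat b⁻¹) * ‖x‖ :=
          mul_le_mul_of_nonneg_right (sv_le_sv_mul_mul_opNorm_inv a b hp hpd.le) (norm_nonneg x)
      _ = opNorm (mat b⁻¹) * (sv (mat (a * b)) p * ‖x‖) := by ring
      _ ≤ opNorm (mat b⁻¹) * ‖y‖ :=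
          mul_le_mul_of_nonneg_left (hV.sv_mul_norm_le hp hpd.le hv) (opNorm_nonneg _)
  have hup : ‖y - U.starProjection y‖ ≤ sv (mat a) (p + 1) * (opNorm (mat b) * ‖x‖) := by
    rw [hy, show mat (a * b) = mat a * mat b from rfl, act_mul]
    exact (hU.norm_act_sub_starProjection_le hpd _).trans <|
      mul_le_mul_of_nonneg_left (norm_act_le _ x) (sv_nonneg _ _)
  calc ‖y - U.starProjection y‖
      ≤ sv (mat a) (p + 1) * (opNorm (mat b) * ‖x‖) := hup
    _ = opNorm (mat b) * (sv (mat a) (p + 1) / sv (mat a) p) * (sv (mat a) p * ‖x‖) := by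
        field_simp
    _ ≤ opNorm (mat b) * (sv (mat a) (p + 1) / sv (mat a) p) * (opNorm (mat b⁻¹) * ‖y‖) :=
        mul_le_mul_of_nonneg_left hlow <|
          mul_nonneg (opNorm_nonneg _) (div_nonneg (sv_nonneg _ _) hpos.le)
    _ = condNumber b * (sv (mat a) (p + 1) / sv (mat a) p) * ‖y‖ := by
        rw [condNumber]
        ring

lemma directedGap_cartanAttractor_le {g h : GL (Fin d) ℝ} {K t : ℝ} (hp : 0 < p) (hpd : p < d)
    (hK : condNumber (g⁻¹ * h) ≤ K) (ht : sv (mat g) (p + 1) / sv (mat g) p ≤ t) :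
    directedGap (cartanAttractor (mat h) p) (cartanAttractor (mat g) p) ≤ K * t := by
  have hgh : IsCartanAttractor (mat (g * (g⁻¹ * h))) p (cartanAttractor (mat h) p) := by
    rw [mul_inv_cancel_left]
    exact isCartanAttractor_cartanAttractor _ p
  refine ((isCartanAttractor_cartanAttractor (mat g) p).directedGap_mul_le hgh hp hpd).trans ?_
  exact mul_le_mul hK ht (div_nonneg (sv_nonneg _ _) (sv_nonneg _ _))
    ((condNumber_nonneg _).trans hK)

lemma exists_norm_starProjection_cartanAttractor_sub_le {g : ℕ → GL (Fin d) ℝ} {K A r : ℝ}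
    (hp : 0 < p) (hpd : p < d) (hr0 : 0 ≤ r) (hr1 : r < 1)
    (hK : ∀ i, condNumber ((g i)⁻¹ * g (i + 1)) ≤ K)
    (hA : ∀ i, sv (mat (g i)) (p + 1) / sv (mat (g i)) p ≤ A * r ^ i) :
    ∃ ξ : Submodule ℝ (Euc d), Module.finrank ℝ ξ = p ∧ ∀ i,
      ‖(cartanAttractor (mat (g i)) p).starProjection - ξ.starProjection‖ ≤
        2 * (K * A) / (1 - r) * r ^ i := by
  have hA0 : 0 ≤ A := by
    simpa using (div_nonneg (sv_nonneg _ _) (sv_nonneg _ _)).trans (hA 0)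
  have hA' : ∀ i, sv (mat (g (i + 1))) (p + 1) / sv (mat (g (i + 1))) p ≤ A * r ^ i := fun i ↦
    (hA (i + 1)).trans <|
      mul_le_mul_of_nonneg_left (pow_le_pow_of_le_one hr0 hr1.le i.le_succ) hA0
  have hK' : ∀ i, condNumber ((g (i + 1))⁻¹ * g i) ≤ K := fun i ↦ by
    rw [← condNumber_inv, mul_inv_rev, inv_inv]
    exact hK i
  obtain ⟨ξ, hξ⟩ := exists_norm_starProjection_sub_le_geometric hr1
    (fun i ↦ (directedGap_cartanAttractor_le hp hpd (hK' i) (hA' i)).trans_eq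
      (mul_assoc K A (r ^ i)).symm)
    (fun i ↦ (directedGap_cartanAttractor_le hp hpd (hK i) (hA i)).trans_eq
      (mul_assoc K A (r ^ i)).symm)
  exact ⟨ξ, finrank_eq_of_norm_starProjection_sub_le_geometric hr0 hr1
    (fun i ↦ (isCartanAttractor_cartanAttractor _ p).finrank_eq hpd.le) hξ, hξ⟩

lemma tendsto_grassDist_cartanAttractor {ι : Type*} {l : Filter ι} {g h : ι → GL (Fin d) ℝ}
    {K : ℝ} {ξ : Submodule ℝ (Euc d)} (hp : 0 < p) (hpd : p < d)
    (hK : ∀ i, condNumber ((g i)⁻¹ * h i) ≤ K)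
    (hg : Tendsto (fun i ↦ sv (mat (g i)) (p + 1) / sv (mat (g i)) p) l (𝓝 0))
    (hξ : Tendsto (fun i ↦ ‖(cartanAttractor (mat (g i)) p).starProjection -
      ξ.starProjection‖) l (𝓝 0)) :
    Tendsto (fun i ↦ grassDist (cartanAttractor (mat (h i)) p) ξ) l (𝓝 0) := by
  refine squeeze_zero (fun i ↦ grassDist_nonneg _ ξ) (fun i ↦ ?_)
    (by simpa using (hg.const_mul K).add hξ)
  calc grassDist (cartanAttractor (mat (h i)) p) ξ
      ≤ directedGap (cartanAttractor (mat (h i)) p) ξ := grassDist_le_directedGap _ ξ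
    _ ≤ directedGap (cartanAttractor (mat (h i)) p) (cartanAttractor (mat (g i)) p) +
          ‖(cartanAttractor (mat (g i)) p).starProjection - ξ.starProjection‖ :=
        directedGap_le_directedGap_add_norm_sub _ _ ξ
    _ ≤ K * (sv (mat (g i)) (p + 1) / sv (mat (g i)) p) +
          ‖(cartanAttractor (mat (g i)) p).starProjection - ξ.starProjection‖ :=
        add_le_add_left (directedGap_cartanAttractor_le hp hpd (hK i) le_rfl) _

end ConditionNumber

section WordLength

variable {Γ : Type*} [Group Γ] {S : Set Γ}

lemma submonoidClosure_eq_top_of_inv_mem (hinv : ∀ s ∈ S, s⁻¹ ∈ S)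
    (hS : Subgroup.closure S = ⊤) : Submonoid.closure S = ⊤ := by
  have hsub : S⁻¹ ⊆ S := fun s hs ↦ inv_inv s ▸ hinv _ hs
  rw [← Set.union_eq_left.2 hsub, ← Subgroup.closure_toSubmonoid, hS, Subgroup.top_toSubmonoid]

lemma exists_list_length_eq_wordLength (hS : Submonoid.closure S = ⊤) (γ : Γ) :
    ∃ l : List Γ, l.length = wordLength S γ ∧ (∀ x ∈ l, x ∈ S) ∧ l.prod = γ := by
  obtain ⟨l, hl, hprod⟩ := Submonoid.exists_list_of_mem_closure (hS ▸ Submonoid.mem_top γ)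
  exact Nat.sInf_mem (s := { n | ∃ l : List Γ, l.length = n ∧ (∀ x ∈ l, x ∈ S) ∧ l.prod = γ })
    ⟨_, l, rfl, hl, hprod⟩

lemma map_list_prod_le_pow_length {N : Type*} [Monoid N] {f : N → ℝ} {M : ℝ}
    (hf0 : ∀ a, 0 ≤ f a) (hf1 : f 1 ≤ 1) (hf : ∀ a b, f (a * b) ≤ f a * f b) (l : List N)
    (hl : ∀ a ∈ l, f a ≤ M) : f l.prod ≤ M ^ l.length := by
  induction l with
  | nil => simpa using hf1
  | cons a l ih =>
    rw [List.prod_cons, List.length_cons, pow_succ']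
    have ha : f a ≤ M := hl a List.mem_cons_self
    exact (hf _ _).trans <| mul_le_mul ha (ih fun b hb ↦ hl b (List.mem_cons_of_mem _ hb))
      (hf0 _) ((hf0 a).trans ha)

lemma exists_condNumber_inv_mul_le_pow {d : ℕ} {ρ : Γ →* GL (Fin d) ℝ}
    (hS : Submonoid.closure S = ⊤) (hρ : BddAbove ((fun s ↦ condNumber (ρ s)) '' S)) :
    ∃ M : ℝ, ∀ ⦃n : ℕ⦄ ⦃γ δ : Γ⦄, wordLength S (γ⁻¹ * δ) ≤ n →
      condNumber ((ρ γ)⁻¹ * ρ δ) ≤ M ^ n := by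
  obtain ⟨M, hM⟩ := hρ
  refine ⟨max M 1, fun n γ δ hn ↦ ?_⟩
  obtain ⟨l, hlen, hl, hprod⟩ := exists_list_length_eq_wordLength hS (γ⁻¹ * δ)
  have hbound : condNumber (ρ l.prod) ≤ max M 1 ^ l.length :=
    map_list_prod_le_pow_length (f := fun γ ↦ condNumber (ρ γ)) (fun _ ↦ condNumber_nonneg _)
      (by simpa only [map_one] using condNumber_one_le)
      (fun a b ↦ by simpa only [map_mul] using condNumber_mul_le (ρ a) (ρ b)) l
      fun s hs ↦ (hM (Set.mem_image_of_mem _ (hl s hs))).trans (le_max_left _ _)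
  rw [hprod, map_mul, map_inv] at hbound
  exact hbound.trans (pow_le_pow_right₀ (le_max_right _ _) (hlen.trans_le hn))

end WordLength

lemma mul_exp_neg_mul_le_geometric {c μ κ b x : ℝ} (hc : 0 ≤ c) (hμ : 0 ≤ μ) {i : ℕ}
    (hx : κ * i - b ≤ x) :
    c * Real.exp (-μ * x) ≤ c * Real.exp (μ * b) * Real.exp (-(μ * κ)) ^ i := by
  rw [mul_assoc, ← Real.exp_nat_mul, ← Real.exp_add]
  refine mul_le_mul_of_nonneg_left (Real.exp_le_exp.2 ?_) hc
  linarith [mul_le_mul_of_nonneg_left hx hμ]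

theorem stmt11_general {Γ : Type*} [Group Γ] {S : Set Γ} (hS : Submonoid.closure S = ⊤)
    {d p : ℕ} (hp : 0 < p) (hpd : p < d) (ρ : Γ →* GL (Fin d) ℝ)
    (hρ : BddAbove ((fun s ↦ condNumber (ρ s)) '' S)) {c μ : ℝ} (hμ : 0 < μ)
    (hAnosov : ∀ γ : Γ, sv (mat (ρ γ)) (p + 1) / sv (mat (ρ γ)) p ≤
      c * Real.exp (-μ * (wordLength S γ : ℝ)))
    (L : ℕ) {κ : ℝ} (hκ : 0 < κ) (b : ℝ) :
    ∃ C' > (0 : ℝ), ∀ α : ℕ → Γ,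
      (∀ i, wordLength S ((α i)⁻¹ * α (i + 1)) ≤ L) →
      (∀ i : ℕ, κ * i - b ≤ wordLength S (α i)) →
      (∀ᶠ i in atTop, HasGap (mat (ρ (α i))) p) ∧
        ∃ ξ : Submodule ℝ (Euc d), Module.finrank ℝ ξ = p ∧
          (∀ i : ℕ, grassDist (cartanAttractor (mat (ρ (α i))) p) ξ ≤
            C' * Real.exp (-(μ * κ) * i)) ∧
          ∀ β : ℕ → Γ, (∃ D : ℕ, ∀ i, wordLength S ((α i)⁻¹ * β i) ≤ D) →
            Tendsto (fun i ↦ grassDist (cartanAttractor (mat (ρ (β i))) p) ξ) atTop (𝓝 0) := by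
  obtain ⟨M, hM⟩ := exists_condNumber_inv_mul_le_pow hS hρ
  set r := Real.exp (-(μ * κ)) with hr
  have hr1 : r < 1 := Real.exp_lt_one_iff.2 (neg_lt_zero.2 (mul_pos hμ hκ))
  have hr0 : 0 ≤ r := Real.exp_nonneg _
  have hpow (i : ℕ) : Real.exp (-(μ * κ) * i) = r ^ i := by
    rw [hr, ← Real.exp_nat_mul, mul_comm]
  have hc : 0 ≤ c := nonneg_of_mul_nonneg_left
    ((div_nonneg (sv_nonneg _ _) (sv_nonneg _ _)).trans (hAnosov 1)) (Real.exp_pos _)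
  set A := c * Real.exp (μ * b)
  set C := 2 * (M ^ L * A) / (1 - r)
  refine ⟨max C 1, lt_max_of_lt_right one_pos, fun α hstep hlen ↦ ?_⟩
  have hratio (i : ℕ) : sv (mat (ρ (α i))) (p + 1) / sv (mat (ρ (α i))) p ≤ A * r ^ i :=
    (hAnosov (α i)).trans (mul_exp_neg_mul_le_geometric hc hμ.le (hlen i))
  obtain ⟨ξ, hfin, hξ⟩ := exists_norm_starProjection_cartanAttractor_sub_le hp hpd hr0 hr1
    (fun i ↦ hM (hstep i)) hratio
  have hgeom (B : ℝ) : Tendsto (fun i : ℕ ↦ B * r ^ i) atTop (𝓝 0) := by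
    simpa using (tendsto_pow_atTop_nhds_zero_of_lt_one hr0 hr1).const_mul B
  refine ⟨?_, ξ, hfin, fun i ↦ ?_, fun β ⟨D, hD⟩ ↦ ?_⟩
  · filter_upwards [(hgeom A).eventually_lt_const one_pos] with i hi
    exact hasGap_of_div_lt_one hp hpd.le ((hratio i).trans_lt hi)
  · rw [hpow]
    exact (grassDist_le_directedGap _ ξ).trans <| (directedGap_le_norm_sub _ ξ).trans <|
      (hξ i).trans <| mul_le_mul_of_nonneg_right (le_max_left _ _) (pow_nonneg hr0 i)
  · exact tendsto_grassDist_cartanAttractor hp hpd (fun i ↦ hM (hD i))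
      (squeeze_zero (fun i ↦ div_nonneg (sv_nonneg _ _) (sv_nonneg _ _)) hratio (hgeom A))
      (squeeze_zero (fun i ↦ norm_nonneg _) hξ (hgeom C))

/-- Proposition 3.6/Lemma 3.7 of the paper: existence and exponential convergence of
the boundary map along geodesic rays, with independence of the ray. -/
theorem stmt11 {Γ : Type*} [Group Γ] (S : Finset Γ)
    (hSsymm : ∀ s ∈ S, s⁻¹ ∈ S) (hSgen : Subgroup.closure (S : Set Γ) = ⊤)
    {d : ℕ} (p : ℕ) (hp1 : 1 ≤ p) (hpd : p ≤ d - 1)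
    (ρ : Γ →* GL (Fin d) ℝ)
    (c μ : ℝ) (hc : 0 < c) (hμ : 0 < μ)
    (hAnosov : ∀ γ : Γ, sv (mat (ρ γ)) (p + 1) / sv (mat (ρ γ)) p ≤
      c * Real.exp (-μ * (wordLength (S : Set Γ) γ : ℝ))) :
    ∃ C' > (0 : ℝ), ∃ μ' > (0 : ℝ), ∀ α : ℕ → Γ,
      (∀ i j : ℕ, wordLength (S : Set Γ) ((α i)⁻¹ * α j) = Nat.dist i j) →
      α 0 = 1 →
      ∃ N : ℕ, (∀ i, N ≤ i → HasGap (mat (ρ (α i))) p) ∧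
        ∃ ξ : Submodule ℝ (Euc d), Module.finrank ℝ ξ = p ∧
          (∀ i, N ≤ i →
            grassDist (cartanAttractor (mat (ρ (α i))) p) ξ ≤
              C' * Real.exp (-μ' * (i : ℝ))) ∧
          ∀ β : ℕ → Γ,
            (∀ i j : ℕ, wordLength (S : Set Γ) ((β i)⁻¹ * β j) = Nat.dist i j) →
            β 0 = 1 →
            (∃ D : ℕ, ∀ i, wordLength (S : Set Γ) ((α i)⁻¹ * β i) ≤ D) →
            Filter.Tendsto (fun i : ℕ => grassDist (cartanAttractor (mat (ρ (β i))) p) ξ)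
              Filter.atTop (nhds 0) := by
  have hS : Submonoid.closure (S : Set Γ) = ⊤ := submonoidClosure_eq_top_of_inv_mem hSsymm hSgen
  have hρ : BddAbove ((fun s ↦ condNumber (ρ s)) '' (S : Set Γ)) :=
    (S.finite_toSet.image _).bddAbove
  obtain ⟨C', hC', h⟩ := stmt11_general hS hp1 (by omega) ρ hρ hμ hAnosov 1 one_pos 0
  refine ⟨C', hC', μ * 1, by rwa [mul_one], fun α hα hα0 ↦ ?_⟩
  obtain ⟨hgap, ξ, hfin, hξ, hβ⟩ :=
    h α (fun i ↦ (hα i (i + 1)).trans_le (by simp [Nat.dist])) fun i ↦ by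
      simpa [hα0, Nat.dist] using (hα 0 i).ge
  obtain ⟨N, hN⟩ := eventually_atTop.1 hgap
  exact ⟨N, hN, ξ, hfin, fun i _ ↦ hξ i, fun β _ _ hD ↦ hβ β hD⟩

end Paper
end
end

section
/- Let K be a field of characteristic zero, let d ≥ 3, and let V = K[X,Y]_{d−1} be the d-dimensional vector space of homogeneous polynomials of degree d−1 in the variables X, Y. For a nonzero linear form ℓ ∈ K[X,Y]_1 and 1 ≤ k ≤ d−1 let ζ^k(ℓ) := {P ∈ V : ℓ^{d−k} divides P}, a k-dimensional subspace of V. Then for all integers p, q, r ≥ 1 with p + q + r = d and all pairwise non-proportional nonzero linear forms ℓ₁, ℓ₂, ℓ₃ ∈ K[X,Y]_1, one has V = ζ^p(ℓ₁) ⊕ ζ^q(ℓ₂) ⊕ ζ^r(ℓ₃). -/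
noncomputable section

namespace Paper

/-- `zeta K d k ℓ` is `ζ^k(ℓ)`: the subspace of homogeneous polynomials of degree
`d-1` in two variables that are divisible by `ℓ^(d-k)`. -/
def zeta (K : Type*) [Field K] (d k : ℕ) (ℓ : MvPolynomial (Fin 2) K) :
    Submodule K (MvPolynomial (Fin 2) K) :=
  MvPolynomial.homogeneousSubmodule (Fin 2) K (d - 1) ⊓
    LinearMap.range (LinearMap.mulLeft K (ℓ ^ (d - k)))

/-- `ζ^k(ℓ)` regarded as a subspace of `V = K[X,Y]_{d-1}`. -/
def zetaIn (K : Type*) [Field K] (d k : ℕ) (ℓ : MvPolynomial (Fin 2) K) :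
    Submodule K ↥(MvPolynomial.homogeneousSubmodule (Fin 2) K (d - 1)) :=
  (zeta K d k ℓ).comap (MvPolynomial.homogeneousSubmodule (Fin 2) K (d - 1)).subtype

/-!
Let `D` be the derivation `∂(ℓ₁, ·)/∂(X, Y)`. It kills `ℓ₁`, lowers degrees by one, lowers the order
of vanishing along `ℓ₂` and `ℓ₃` by at most one, and takes nonzero constant values on `ℓ₂` and `ℓ₃`.
Given `P₁ + P₂ + P₃ = 0` with `Pᵢ` in the three flag spaces for `(p, q, r)`, the forms `D Pᵢ` are in
the flag spaces for `(p - 1, q, r)` one degree lower, so by induction `D P₂ = D P₃ = 0`. A form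
divisible by `ℓ₂` and killed by `D` vanishes: as `D ℓ₂` is a unit, its order of vanishing along `ℓ₂`
can be raised past its degree. Hence the three spaces are independent, and multiplication by powers
of the `ℓᵢ` shows that their dimensions add up to at least `d = dim V`.
-/

open MvPolynomial Module

theorem isInternal_of_finrank_le_sum {K V ι : Type*} [DivisionRing K] [AddCommGroup V] [Module K V]
    [FiniteDimensional K V] [Fintype ι] [DecidableEq ι] {A : ι → Submodule K V}
    (hindep : ∀ x : ι → V, (∀ i, x i ∈ A i) → ∑ i, x i = 0 → ∀ i, x i = 0)
    (hrank : finrank K V ≤ ∑ i, finrank K (A i)) :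
    DirectSum.IsInternal A := by
  classical
  have hinj : Function.Injective (DirectSum.coeLinearMap A) := by
    refine (injective_iff_map_eq_zero _).2 fun f hf => DFinsupp.ext fun i => Subtype.ext ?_
    rw [DirectSum.coeLinearMap_eq_dfinsuppSum, DFinsupp.sum_eq_sum_fintype _ fun _ => rfl] at hf
    exact hindep (fun i => f i) (fun i => (f i).2) hf i
  have hrank_eq : finrank K (DirectSum ι fun i => A i) = finrank K V :=
    (LinearMap.finrank_le_finrank_of_injective hinj).antisymm (by rwa [finrank_directSum])
  exact ⟨hinj, (LinearMap.injective_iff_surjective_of_finrank_eq_finrank hrank_eq).1 hinj⟩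

section Derivation

variable {R A : Type*} [CommSemiring R] [CommSemiring A] [Algebra R A] (D : Derivation R A A)
  {a x : A} {m : ℕ}

theorem pow_dvd_derivation_of_pow_succ_dvd (h : a ^ (m + 1) ∣ x) : a ^ m ∣ D x := by
  obtain ⟨b, rfl⟩ := h
  refine ⟨a * D b + (m + 1) * D a * b, ?_⟩
  simp only [Derivation.leibniz, Derivation.leibniz_pow, smul_eq_mul, nsmul_eq_mul,
    Nat.add_sub_cancel, Nat.cast_add, Nat.cast_one]
  ring

theorem pow_dvd_derivation_of_pow_dvd (ha : D a = 0) (h : a ^ m ∣ x) : a ^ m ∣ D x := by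
  obtain ⟨b, rfl⟩ := h
  exact ⟨D b, by simp [Derivation.leibniz_pow, ha]⟩

end Derivation

theorem pow_succ_dvd_of_derivation_eq_zero {R A : Type*} [CommSemiring R] [CommRing A] [IsDomain A]
    [Algebra R A] (D : Derivation R A A) {a x : A} {m : ℕ} (ha : a ≠ 0) (hDa : IsUnit (D a))
    (hm : IsUnit ((m + 1 : ℕ) : A)) (hDx : D x = 0) (h : a ^ (m + 1) ∣ x) :
    a ^ (m + 2) ∣ x := by
  obtain ⟨b, rfl⟩ := h
  have hleibniz : a ^ m * ((m + 1 : ℕ) * D a * b + a * D b) = 0 := by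
    rw [← hDx]
    simp only [Derivation.leibniz, Derivation.leibniz_pow, smul_eq_mul, nsmul_eq_mul,
      Nat.add_sub_cancel]
    ring
  have hdvd : a ∣ (m + 1 : ℕ) * D a * b :=
    ⟨-D b, by linear_combination (mul_eq_zero.1 hleibniz).resolve_left (pow_ne_zero m ha)⟩
  rw [pow_succ a (m + 1)]
  exact mul_dvd_mul_left _ ((hm.mul hDa).dvd_mul_left.1 hdvd)

section Homogeneous

theorem eq_C_of_isHomogeneous_zero {σ R : Type*} [CommSemiring R] {F : MvPolynomial σ R}
    (hF : F.IsHomogeneous 0) : F = C (coeff 0 F) :=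
  totalDegree_eq_zero_iff_eq_C.1 ((totalDegree_zero_iff_isHomogeneous σ).2 hF)

variable {σ R : Type*} [CommRing R] [IsDomain R] {ℓ P : MvPolynomial σ R} {n : ℕ}

theorem eq_zero_of_lt_of_pow_dvd (hℓ : ℓ.IsHomogeneous 1) (hℓ0 : ℓ ≠ 0) (hP : P.IsHomogeneous n)
    {m : ℕ} (hnm : n < m) (hdvd : ℓ ^ m ∣ P) : P = 0 := by
  by_contra hP0
  have hle := totalDegree_le_of_dvd_of_isDomain hdvd hP0
  rw [hP.totalDegree hP0, (hℓ.pow m).totalDegree (pow_ne_zero m hℓ0), one_mul] at hle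
  exact hnm.not_ge hle

theorem eq_zero_of_derivation_eq_zero (D : Derivation R (MvPolynomial σ R) (MvPolynomial σ R))
    (hn : IsUnit (n.factorial : R)) (hℓ : ℓ.IsHomogeneous 1) (hDℓ : IsUnit (D ℓ))
    (hP : P.IsHomogeneous n) (hDP : D P = 0) (hdvd : ℓ ∣ P) : P = 0 := by
  have hℓ0 : ℓ ≠ 0 := by
    rintro rfl
    simp at hDℓ
  have hpow (m : ℕ) (hm : m ≤ n) : ℓ ^ (m + 1) ∣ P := by
    induction m with
    | zero => simpa using hdvd
    | succ m ih =>
      have hunit : IsUnit ((m + 1 : ℕ) : R) :=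
        isUnit_of_dvd_unit (Nat.cast_dvd_cast (Nat.dvd_factorial m.succ_pos hm)) hn
      exact pow_succ_dvd_of_derivation_eq_zero D hℓ0 hDℓ (by simpa using hunit.map C) hDP
        (ih (by omega))
  exact eq_zero_of_lt_of_pow_dvd hℓ hℓ0 hP n.lt_succ_self (hpow n le_rfl)

end Homogeneous

section Jacobian

variable {R : Type*} [CommRing R] {F G : MvPolynomial (Fin 2) R}

/-- The Jacobian determinant `G ↦ ∂(F, G)/∂(X, Y)`, as a derivation in `G`. For a linear form `F`
it is the directional derivative along the line on which `F` vanishes. -/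
def jacobianDerivation (F : MvPolynomial (Fin 2) R) :
    Derivation R (MvPolynomial (Fin 2) R) (MvPolynomial (Fin 2) R) :=
  pderiv 0 F • pderiv 1 - pderiv 1 F • pderiv 0

theorem jacobianDerivation_apply (F G : MvPolynomial (Fin 2) R) :
    jacobianDerivation F G = pderiv 0 F * pderiv 1 G - pderiv 1 F * pderiv 0 G :=
  rfl

theorem jacobianDerivation_self (F : MvPolynomial (Fin 2) R) : jacobianDerivation F F = 0 := by
  rw [jacobianDerivation_apply, mul_comm, sub_self]

theorem isHomogeneous_jacobianDerivation {m n : ℕ} (hF : F.IsHomogeneous (m + 1))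
    (hG : G.IsHomogeneous (n + 1)) : (jacobianDerivation F G).IsHomogeneous (n + m) :=
  add_comm m n ▸ (hF.pderiv.mul hG.pderiv).sub (hF.pderiv.mul hG.pderiv)

theorem pderiv_mul_eq_of_jacobianDerivation_eq_zero (hF : F.IsHomogeneous 1)
    (hG : G.IsHomogeneous 1) (h : jacobianDerivation F G = 0) (i : Fin 2) :
    pderiv i G * F = pderiv i F * G := by
  have heulerF : X 0 * pderiv 0 F + X 1 * pderiv 1 F = F := by simpa using hF.sum_X_mul_pderiv
  have heulerG : X 0 * pderiv 0 G + X 1 * pderiv 1 G = G := by simpa using hG.sum_X_mul_pderiv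
  rw [jacobianDerivation_apply] at h
  match i with
  | 0 => linear_combination pderiv 0 F * heulerG - pderiv 0 G * heulerF - X 1 * h
  | 1 => linear_combination pderiv 1 F * heulerG - pderiv 1 G * heulerF + X 0 * h

end Jacobian

section LinearForms

variable {K : Type*} [Field K] {ℓ₁ ℓ₂ ℓ₃ P P₁ P₂ P₃ : MvPolynomial (Fin 2) K} {n : ℕ}

theorem jacobianDerivation_ne_zero (h₁ : ℓ₁.IsHomogeneous 1) (h₂ : ℓ₂.IsHomogeneous 1)
    (h₁₂ : LinearIndependent K ![ℓ₁, ℓ₂]) : jacobianDerivation ℓ₁ ℓ₂ ≠ 0 := by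
  intro hzero
  have hpderiv (i : Fin 2) : pderiv i ℓ₁ = 0 := by
    have hrel := pderiv_mul_eq_of_jacobianDerivation_eq_zero h₁ h₂ hzero i
    rw [eq_C_of_isHomogeneous_zero (h₁.pderiv (i := i)),
      eq_C_of_isHomogeneous_zero (h₂.pderiv (i := i)), ← smul_eq_C_mul, ← smul_eq_C_mul,
      ← sub_eq_zero, sub_eq_add_neg, ← neg_smul] at hrel
    have hcoeff := (LinearIndependent.pair_iff.1 h₁₂ _ _ hrel).2
    rw [eq_C_of_isHomogeneous_zero (h₁.pderiv (i := i)), neg_eq_zero.1 hcoeff, C_0]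
  have heuler := h₁.sum_X_mul_pderiv
  simp only [hpderiv, mul_zero, Finset.sum_const_zero, one_smul] at heuler
  exact h₁₂.ne_zero 0 heuler.symm

theorem isUnit_jacobianDerivation (h₁ : ℓ₁.IsHomogeneous 1) (h₂ : ℓ₂.IsHomogeneous 1)
    (h₁₂ : LinearIndependent K ![ℓ₁, ℓ₂]) : IsUnit (jacobianDerivation ℓ₁ ℓ₂) := by
  have hne := jacobianDerivation_ne_zero h₁ h₂ h₁₂
  rw [eq_C_of_isHomogeneous_zero (isHomogeneous_jacobianDerivation h₁ h₂)] at hne ⊢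
  exact (isUnit_iff_ne_zero.2 fun h => hne (by rw [h, C_0])).map C

theorem eq_zero_of_jacobianDerivation_eq_zero (hn : IsUnit (n.factorial : K))
    (h₁ : ℓ₁.IsHomogeneous 1) (h₂ : ℓ₂.IsHomogeneous 1) (h₁₂ : LinearIndependent K ![ℓ₁, ℓ₂])
    (hP : P.IsHomogeneous n) (hDP : jacobianDerivation ℓ₁ P = 0) {m : ℕ} (hm : m ≠ 0)
    (hdvd : ℓ₂ ^ m ∣ P) : P = 0 :=
  eq_zero_of_derivation_eq_zero _ hn h₂ (isUnit_jacobianDerivation h₁ h₂ h₁₂) hP hDP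
    ((dvd_pow_self ℓ₂ hm).trans hdvd)

theorem eq_zero_of_lt_add_of_pow_dvd (hn : IsUnit (n.factorial : K))
    (h₁ : ℓ₁.IsHomogeneous 1) (h₂ : ℓ₂.IsHomogeneous 1) (h₁₂ : LinearIndependent K ![ℓ₁, ℓ₂])
    (hP : P.IsHomogeneous n) {a b : ℕ} (hab : n < a + b)
    (hdvd₁ : ℓ₁ ^ a ∣ P) (hdvd₂ : ℓ₂ ^ b ∣ P) : P = 0 := by
  induction b generalizing n P with
  | zero => exact eq_zero_of_lt_of_pow_dvd h₁ (h₁₂.ne_zero 0) hP hab hdvd₁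
  | succ b ih =>
    obtain _ | n := n
    · exact eq_zero_of_lt_of_pow_dvd h₂ (h₁₂.ne_zero 1) hP b.succ_pos hdvd₂
    have hDP : jacobianDerivation ℓ₁ P = 0 :=
      ih (hn.natCast_factorial_of_le n.le_succ) (isHomogeneous_jacobianDerivation h₁ hP)
        (by omega) (pow_dvd_derivation_of_pow_dvd _ (jacobianDerivation_self ℓ₁) hdvd₁)
        (pow_dvd_derivation_of_pow_succ_dvd _ hdvd₂)
    exact eq_zero_of_jacobianDerivation_eq_zero hn h₁ h₂ h₁₂ hP hDP b.succ_ne_zero hdvd₂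

theorem eq_zero_of_add_add_eq_zero_of_pow_dvd (hn : IsUnit (n.factorial : K))
    (h₁ : ℓ₁.IsHomogeneous 1) (h₂ : ℓ₂.IsHomogeneous 1) (h₃ : ℓ₃.IsHomogeneous 1)
    (h₁₂ : LinearIndependent K ![ℓ₁, ℓ₂]) (h₁₃ : LinearIndependent K ![ℓ₁, ℓ₃])
    (h₂₃ : LinearIndependent K ![ℓ₂, ℓ₃])
    (hP₁ : P₁.IsHomogeneous n) (hP₂ : P₂.IsHomogeneous n) (hP₃ : P₃.IsHomogeneous n)
    {p q r : ℕ} (hpqr : n < p + q + r) (hdvd₁ : ℓ₁ ^ (q + r) ∣ P₁) (hdvd₂ : ℓ₂ ^ (p + r) ∣ P₂)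
    (hdvd₃ : ℓ₃ ^ (p + q) ∣ P₃) (hsum : P₁ + P₂ + P₃ = 0) : P₁ = 0 ∧ P₂ = 0 ∧ P₃ = 0 := by
  induction p generalizing n P₁ P₂ P₃ with
  | zero =>
    simp only [zero_add] at hpqr hdvd₂ hdvd₃
    obtain rfl : P₁ = 0 := eq_zero_of_lt_of_pow_dvd h₁ (h₁₂.ne_zero 0) hP₁ hpqr hdvd₁
    obtain rfl : P₂ = -P₃ := by linear_combination hsum
    obtain rfl : P₃ = 0 :=
      eq_zero_of_lt_add_of_pow_dvd hn h₂ h₃ h₂₃ hP₃ (by omega) (dvd_neg.1 hdvd₂) hdvd₃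
    simp
  | succ p ih =>
    rw [add_right_comm] at hdvd₂ hdvd₃
    suffices h : P₂ = 0 ∧ P₃ = 0 by
      obtain ⟨rfl, rfl⟩ := h
      simpa using hsum
    obtain _ | n := n
    · exact ⟨eq_zero_of_lt_of_pow_dvd h₂ (h₁₂.ne_zero 1) hP₂ (Nat.succ_pos _) hdvd₂,
        eq_zero_of_lt_of_pow_dvd h₃ (h₁₃.ne_zero 1) hP₃ (Nat.succ_pos _) hdvd₃⟩
    obtain ⟨-, hDP₂, hDP₃⟩ := ih (hn.natCast_factorial_of_le n.le_succ)
      (isHomogeneous_jacobianDerivation h₁ hP₁) (isHomogeneous_jacobianDerivation h₁ hP₂)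
      (isHomogeneous_jacobianDerivation h₁ hP₃) (by omega)
      (pow_dvd_derivation_of_pow_dvd _ (jacobianDerivation_self ℓ₁) hdvd₁)
      (pow_dvd_derivation_of_pow_succ_dvd _ hdvd₂) (pow_dvd_derivation_of_pow_succ_dvd _ hdvd₃)
      (by rw [← map_add, ← map_add, hsum, map_zero])
    exact ⟨eq_zero_of_jacobianDerivation_eq_zero hn h₁ h₂ h₁₂ hP₂ hDP₂ (Nat.succ_ne_zero _) hdvd₂,
      eq_zero_of_jacobianDerivation_eq_zero hn h₁ h₃ h₁₃ hP₃ hDP₃ (Nat.succ_ne_zero _) hdvd₃⟩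

end LinearForms

section Dimension

variable {K : Type*} [Field K]

theorem mem_degreeLT_succ_iff_natDegree_le {R : Type*} [Semiring R] {n : ℕ} {f : Polynomial R} :
    f ∈ Polynomial.degreeLT R (n + 1) ↔ f.natDegree ≤ n := by
  rw [Polynomial.degreeLT_succ_eq_degreeLE, Polynomial.mem_degreeLE,
    Polynomial.natDegree_le_iff_degree_le]

theorem natDegree_aeval_X_one_le {R : Type*} [CommSemiring R] {n : ℕ} {F : MvPolynomial (Fin 2) R}
    (hF : F.IsHomogeneous n) :
    (aeval ![(Polynomial.X : Polynomial R), 1] F).natDegree ≤ n := by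
  rw [← mul_one n]
  refine aeval_natDegree_le F hF.totalDegree_le _ fun i => ?_
  fin_cases i
  · exact Polynomial.natDegree_X_le
  · exact Polynomial.natDegree_one.trans_le zero_le_one

/-- Homogenization of univariate polynomials of degree at most `n` to binary forms of degree `n`,
inverse to the dehomogenization `F(X, Y) ↦ F(X, 1)`; used to compute the dimension of the space of
binary forms. -/
def homogenizeEquiv (R : Type*) [CommSemiring R] (n : ℕ) :
    Polynomial.degreeLT R (n + 1) ≃ₗ[R] homogeneousSubmodule (Fin 2) R n where
  __ := (Polynomial.homogenizeLM n).restrict fun f _ => Polynomial.isHomogeneous_homogenize f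
  invFun F := ⟨aeval ![Polynomial.X, 1] F.1,
    mem_degreeLT_succ_iff_natDegree_le.2 (natDegree_aeval_X_one_le F.2)⟩
  left_inv f := Subtype.ext
    (Polynomial.aeval_homogenize_X_one f.1 (mem_degreeLT_succ_iff_natDegree_le.1 f.2))
  right_inv F := Subtype.ext (Polynomial.homogenize_eq_of_isHomogeneous F.2 rfl)

theorem finrank_homogeneousSubmodule_fin_two (n : ℕ) :
    finrank K (homogeneousSubmodule (Fin 2) K n) = n + 1 := by
  rw [← (homogenizeEquiv K n).finrank_eq, (Polynomial.degreeLTEquiv K (n + 1)).finrank_eq,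
    finrank_fin_fun]

instance finiteDimensional_homogeneousSubmodule {σ : Type*} [Finite σ] (n : ℕ) :
    FiniteDimensional K (homogeneousSubmodule σ K n) :=
  Module.Finite.iff_fg.2 (homogeneousSubmodule_fg _ _ n)

variable {d k : ℕ} {ℓ : MvPolynomial (Fin 2) K}

theorem mem_zetaIn {P : homogeneousSubmodule (Fin 2) K (d - 1)} :
    P ∈ zetaIn K d k ℓ ↔ ℓ ^ (d - k) ∣ (P : MvPolynomial (Fin 2) K) := by
  simp [zetaIn, zeta, dvd_def, eq_comm]

theorem le_finrank_zetaIn (hkd : k ≤ d) (hℓ : ℓ.IsHomogeneous 1) (hℓ0 : ℓ ≠ 0) :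
    k ≤ finrank K (zetaIn K d k ℓ) := by
  obtain _ | k := k
  · exact Nat.zero_le _
  have hmul (A) (hA : A ∈ homogeneousSubmodule (Fin 2) K k) :
      ℓ ^ (d - (k + 1)) * A ∈ homogeneousSubmodule (Fin 2) K (d - 1) := by
    have hhom := (hℓ.pow (d - (k + 1))).mul hA
    rwa [one_mul, show d - (k + 1) + k = d - 1 by omega] at hhom
  let mulPow : homogeneousSubmodule (Fin 2) K k →ₗ[K] zetaIn K d (k + 1) ℓ :=
    ((LinearMap.mulLeft K (ℓ ^ (d - (k + 1)))).restrict hmul).codRestrict _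
      fun A => mem_zetaIn.2 (dvd_mul_right _ A.1)
  have hinj : Function.Injective mulPow := fun A B hAB =>
    Subtype.ext (mul_left_cancel₀ (pow_ne_zero _ hℓ0) (congrArg (fun P => P.1.1) hAB))
  calc k + 1 = finrank K (homogeneousSubmodule (Fin 2) K k) :=
        (finrank_homogeneousSubmodule_fin_two k).symm
    _ ≤ finrank K (zetaIn K d (k + 1) ℓ) := LinearMap.finrank_le_finrank_of_injective hinj

end Dimension

theorem stmt14_general {K : Type*} [Field K] {d : ℕ} (hd : 0 < d)
    (hK : IsUnit ((d - 1).factorial : K)) {p q r : ℕ} (hsum : p + q + r = d)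
    {ℓ₁ ℓ₂ ℓ₃ : MvPolynomial (Fin 2) K} (h₁ : ℓ₁.IsHomogeneous 1) (h₂ : ℓ₂.IsHomogeneous 1)
    (h₃ : ℓ₃.IsHomogeneous 1) (h₁₂ : LinearIndependent K ![ℓ₁, ℓ₂])
    (h₁₃ : LinearIndependent K ![ℓ₁, ℓ₃]) (h₂₃ : LinearIndependent K ![ℓ₂, ℓ₃]) :
    DirectSum.IsInternal ![zetaIn K d p ℓ₁, zetaIn K d q ℓ₂, zetaIn K d r ℓ₃] := by
  refine isInternal_of_finrank_le_sum (fun P hP hP0 => ?_) ?_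
  · have hdvd₁ : ℓ₁ ^ (q + r) ∣ (P 0).1 := by
      simpa [show d - p = q + r by omega] using mem_zetaIn.1 (hP 0)
    have hdvd₂ : ℓ₂ ^ (p + r) ∣ (P 1).1 := by
      simpa [show d - q = p + r by omega] using mem_zetaIn.1 (hP 1)
    have hdvd₃ : ℓ₃ ^ (p + q) ∣ (P 2).1 := by
      simpa [show d - r = p + q by omega] using mem_zetaIn.1 (hP 2)
    rw [Fin.sum_univ_three] at hP0
    simpa [Fin.forall_fin_succ] using eq_zero_of_add_add_eq_zero_of_pow_dvd hK h₁ h₂ h₃ h₁₂ h₁₃ h₂₃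
      (P 0).2 (P 1).2 (P 2).2 (by omega) hdvd₁ hdvd₂ hdvd₃ (congrArg Subtype.val hP0)
  · rw [finrank_homogeneousSubmodule_fin_two, Nat.sub_add_cancel hd, Fin.sum_univ_three, ← hsum]
    exact add_le_add_three (le_finrank_zetaIn (by omega) h₁ (h₁₂.ne_zero 0))
      (le_finrank_zetaIn (by omega) h₂ (h₁₂.ne_zero 1))
      (le_finrank_zetaIn (by omega) h₃ (h₁₃.ne_zero 1))

/-- Proposition 6.8 (`VeronesseHyperconvex`): hyperconvexity of the Veronese flags.
For pairwise non-proportional nonzero linear forms `ℓ₁, ℓ₂, ℓ₃` and `p + q + r = d`,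
`K[X,Y]_{d-1} = ζ^p(ℓ₁) ⊕ ζ^q(ℓ₂) ⊕ ζ^r(ℓ₃)`. -/
theorem stmt14 {K : Type*} [Field K] [CharZero K] (d : ℕ) (hd : 3 ≤ d)
    (p q r : ℕ) (hp : 1 ≤ p) (hq : 1 ≤ q) (hr : 1 ≤ r) (hsum : p + q + r = d)
    (ℓ₁ ℓ₂ ℓ₃ : MvPolynomial (Fin 2) K)
    (h1 : ℓ₁ ∈ MvPolynomial.homogeneousSubmodule (Fin 2) K 1) (h1ne : ℓ₁ ≠ 0)
    (h2 : ℓ₂ ∈ MvPolynomial.homogeneousSubmodule (Fin 2) K 1) (h2ne : ℓ₂ ≠ 0)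
    (h3 : ℓ₃ ∈ MvPolynomial.homogeneousSubmodule (Fin 2) K 1) (h3ne : ℓ₃ ≠ 0)
    (h12 : ∀ t : K, ℓ₂ ≠ t • ℓ₁) (h13 : ∀ t : K, ℓ₃ ≠ t • ℓ₁)
    (h23 : ∀ t : K, ℓ₃ ≠ t • ℓ₂) :
    DirectSum.IsInternal
      (fun i : Fin 3 => ![zetaIn K d p ℓ₁, zetaIn K d q ℓ₂, zetaIn K d r ℓ₃] i) :=
  stmt14_general (by omega) (IsUnit.natCast_factorial_of_algebra K _) hsum h1 h2 h3
    ((LinearIndependent.pair_iff' h1ne).2 fun t => (h12 t).symm)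
    ((LinearIndependent.pair_iff' h1ne).2 fun t => (h13 t).symm)
    ((LinearIndependent.pair_iff' h2ne).2 fun t => (h23 t).symm)

end Paper
end
end
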